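/- arXiv:2006.12058 — 3 statements merged into one kernel-verified Lean document; each statement's English description precedes it below -/
import Mathlib

section
/- Let Φ = {φ_i(x) = T_i x + a_i}_{i=1}^ℓ be an affine iterated function system on ℝ^d (each T_i invertible with ‖T_i‖ < 1) with attractor E. Suppose there exist an invertible d×d real matrix T and a constant c > 1 such that B(0, c^{-1}) ⊆ T^{-k} T_I(B(0,1)) ⊆ B(0, c) for all k ∈ ℕ and all words I ∈ {1, …, ℓ}^k, where T_I = T_{i_1} ⋯ T_{i_k} for I = i_1…i_k. Suppose in addition the origin is an interior point of conv(A), where A = {a_1, …, a_ℓ}. Then there exist δ > 0 and n ∈ ℕ such that, with B = B(0, δ) and Φ(B) = ∪_{i=1}^ℓ φ_i(B), for all k ∈ ℕ and all I_1, …, I_n ∈ {1, …, ℓ}^k one has T_{I_1}Φ(B) + ⋯ + T_{I_n}Φ(B) ⊇ T_{I_1}B + ⋯ + T_{I_n}B, and furthermore ⊕_n E ⊇ ⊕_n B. -/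
open Metric Set

/-- The arithmetic (Minkowski) sum `E 0 + ⋯ + E (n-1)` of a finite family of subsets of
`ℝ^d`. -/
def sumSets {d n : ℕ} (E : Fin n → Set (EuclideanSpace ℝ (Fin d))) :
    Set (EuclideanSpace ℝ (Fin d)) :=
  {y | ∃ x : Fin n → EuclideanSpace ℝ (Fin d), (∀ i, x i ∈ E i) ∧ y = ∑ i, x i}

/-- The product `T_I = T_{i_1} ⋯ T_{i_k}` of matrices along the word `I = i_1…i_k`. -/
def wordProd {d ℓ : ℕ} (T : Fin ℓ → Matrix (Fin d) (Fin d) ℝ) {k : ℕ}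
    (I : Fin k → Fin ℓ) : Matrix (Fin d) (Fin d) ℝ :=
  (List.ofFn fun j => T (I j)).prod

/-- Points of convex hulls can be replaced by vertices so that the total error
grows only like the square root of the number of points. -/
lemma exists_vertices_norm_sum_sub_sq_le {V ι : Type*} [NormedAddCommGroup V]
    [InnerProductSpace ℝ V] {R : ℝ} :
    ∀ {n : ℕ} (u : Fin n → ι → V) (v : Fin n → V),
      (∀ j, v j ∈ convexHull ℝ (range (u j))) → (∀ j i, ‖u j i - v j‖ ≤ R) →
      ∃ i : Fin n → ι, ‖∑ j, (u j (i j) - v j)‖ ^ 2 ≤ n * R ^ 2 := by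
  intro n
  induction n with
  | zero => intro u v _ _; exact ⟨Fin.elim0, by simp⟩
  | succ n ih =>
    intro u v hv hR
    obtain ⟨i, hi⟩ := ih (fun j => u j.castSucc) (fun j => v j.castSucc)
      (fun j => hv _) (fun j => hR _)
    set s := ∑ j : Fin n, (u j.castSucc (i j) - v j.castSucc)
    obtain ⟨i', hi'⟩ : ∃ i', inner ℝ s (u (Fin.last n) i' - v (Fin.last n)) ≤ 0 := by
      by_contra! h
      have hconv : Convex ℝ {x : V | inner ℝ s (v (Fin.last n)) < inner ℝ s x} :=
        convex_halfSpace_gt (innerₛₗ ℝ s).isLinear _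
      have hsub := convexHull_min (s := range (u (Fin.last n)))
        (by rintro _ ⟨i', rfl⟩
            have := h i'
            rw [inner_sub_right] at this
            simpa using this) hconv
      exact lt_irrefl (inner ℝ s (v (Fin.last n))) (hsub (hv (Fin.last n)))
    refine ⟨Fin.snoc i i', ?_⟩
    rw [Fin.sum_univ_castSucc]
    simp only [Fin.snoc_castSucc, Fin.snoc_last]
    rw [norm_add_sq_real]
    have hlast : ‖u (Fin.last n) i' - v (Fin.last n)‖ ^ 2 ≤ R ^ 2 :=
      pow_le_pow_left₀ (norm_nonneg _) (hR _ _) 2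
    push_cast
    linarith

/-- If the convex hull of the images of the `a i` under each `M j` contains a ball of radius
`r`, then sums of the vertices `M j (a i)` and of vectors of norm at most `ε` cover the ball of
radius `n * r`, as soon as `n` is large. -/
lemma exists_sum_add_eq_of_norm_le {V ι : Type*} [NormedAddCommGroup V]
    [InnerProductSpace ℝ V] {a : ι → V} {n : ℕ} (hn : 0 < n) {M : Fin n → V →ₗ[ℝ] V}
    {r K ε : ℝ} (hε : 0 ≤ ε)
    (hhull : ∀ j z, ‖z‖ ≤ r → ∃ x ∈ convexHull ℝ (range a), M j x = z)
    (hK : ∀ j i, ‖M j (a i)‖ ≤ K) (hlarge : (K + r) ^ 2 ≤ n * ε ^ 2)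
    {y : V} (hy : ‖y‖ ≤ n * r) :
    ∃ (i : Fin n → ι) (z : V), ‖z‖ ≤ ε ∧ y = ∑ j, (z + M j (a (i j))) := by
  have hn' : (0 : ℝ) < n := by exact_mod_cast hn
  set w : V := (n : ℝ)⁻¹ • y
  have hw : ‖w‖ ≤ r := by
    rw [norm_smul, norm_inv, Real.norm_natCast]
    exact (inv_mul_le_iff₀ hn').2 hy
  have hnw : (n : ℝ) • w = y := smul_inv_smul₀ hn'.ne' y
  obtain ⟨i, hi⟩ := exists_vertices_norm_sum_sub_sq_le (R := K + r)
    (fun j i => M j (a i)) (fun _ => w)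
    (fun j => by
      obtain ⟨x, hx, hxw⟩ := hhull j w hw
      have : M j x ∈ M j '' convexHull ℝ (range a) := mem_image_of_mem _ hx
      rw [(M j).image_convexHull, ← range_comp, hxw] at this
      exact this)
    (fun j i => (norm_sub_le _ _).trans (add_le_add (hK j i) hw))
  rw [Finset.sum_sub_distrib] at hi
  simp only [Finset.sum_const, Finset.card_univ, Fintype.card_fin] at hi
  rw [← Nat.cast_smul_eq_nsmul ℝ, hnw] at hi
  refine ⟨i, (n : ℝ)⁻¹ • (y - ∑ j, M j (a (i j))), ?_, ?_⟩
  · rw [norm_smul, norm_inv, Real.norm_natCast, inv_mul_le_iff₀ hn', norm_sub_rev]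
    refine abs_le_of_sq_le_sq' ?_ (by positivity) |>.2
    calc _ ≤ _ := hi
      _ ≤ n * (n * ε ^ 2) := by gcongr
      _ = _ := by ring
  · rw [Finset.sum_add_distrib]
    simp only [Finset.sum_const, Finset.card_univ, Fintype.card_fin]
    rw [← Nat.cast_smul_eq_nsmul ℝ, smul_inv_smul₀ hn'.ne', sub_add_cancel]

lemma norm_apply_le_of_image_closedBall_subset {V : Type*} [NormedAddCommGroup V]
    [NormedSpace ℝ V] {M : V →ₗ[ℝ] V} {c : ℝ}
    (h : M '' closedBall 0 1 ⊆ closedBall 0 c) (x : V) : ‖M x‖ ≤ c * ‖x‖ := by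
  rcases eq_or_ne x 0 with rfl | hx
  · simp
  have hx' : 0 < ‖x‖ := norm_pos_iff.2 hx
  have := h (mem_image_of_mem M (show ‖x‖⁻¹ • x ∈ closedBall (0 : V) 1 by
    simp [norm_smul, hx'.ne']))
  rw [mem_closedBall_zero_iff, map_smul, norm_smul, norm_inv, norm_norm,
    inv_mul_le_iff₀ hx'] at this
  linarith

lemma exists_apply_eq_of_closedBall_subset_image {V : Type*} [NormedAddCommGroup V]
    [NormedSpace ℝ V] {M : V →ₗ[ℝ] V} {r s : ℝ} (hs : 0 < s)
    (h : closedBall 0 r ⊆ M '' closedBall 0 1) {z : V} (hz : ‖z‖ ≤ s * r) :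
    ∃ x, ‖x‖ ≤ s ∧ M x = z := by
  obtain ⟨x, hx, hxz⟩ := h (show s⁻¹ • z ∈ closedBall (0 : V) r by
    rw [mem_closedBall_zero_iff, norm_smul, norm_inv, Real.norm_of_nonneg hs.le]
    exact (inv_mul_le_iff₀ hs).2 hz)
  refine ⟨s • x, ?_, ?_⟩
  · rw [norm_smul, Real.norm_of_nonneg hs.le]
    exact mul_le_of_le_one_right hs.le (mem_closedBall_zero_iff.1 hx)
  · rw [map_smul, hxz, smul_inv_smul₀ hs.ne']

lemma toEuclideanLin_mul_apply {d : ℕ} (A B : Matrix (Fin d) (Fin d) ℝ)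
    (x : EuclideanSpace ℝ (Fin d)) :
    Matrix.toEuclideanLin (A * B) x = Matrix.toEuclideanLin A (Matrix.toEuclideanLin B x) := by
  simp [Matrix.toLpLin_mul_same]

lemma wordProd_snoc {d ℓ : ℕ} (T : Fin ℓ → Matrix (Fin d) (Fin d) ℝ) {k : ℕ}
    (I : Fin k → Fin ℓ) (i : Fin ℓ) :
    wordProd T (Fin.snoc I i : Fin (k + 1) → Fin ℓ) = wordProd T I * T i := by
  rw [wordProd, List.ofFn_succ_last]
  simp [wordProd]

lemma isCompact_sumSets {d n : ℕ} {E : Fin n → Set (EuclideanSpace ℝ (Fin d))}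
    (hE : ∀ j, IsCompact (E j)) : IsCompact (sumSets E) := by
  have : sumSets E = (fun x : Fin n → EuclideanSpace ℝ (Fin d) => ∑ j, x j) '' univ.pi E := by
    ext y
    simp [sumSets, eq_comm]
  rw [this]
  exact (isCompact_univ_pi hE).image (by fun_prop)

section IteratedFunctionSystem

variable {d ℓ : ℕ} {T : Fin ℓ → Matrix (Fin d) (Fin d) ℝ}
  {a : Fin ℓ → EuclideanSpace ℝ (Fin d)}

/-- The ball condition gives one refinement step for sums of cylinders. -/
lemma exists_sum_cylinders_subset_sum_refined
    (hball : ∃ (S : Matrix (Fin d) (Fin d) ℝ) (c : ℝ), IsUnit S ∧ 1 < c ∧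
      ∀ (k : ℕ) (I : Fin k → Fin ℓ),
        Metric.closedBall (0 : EuclideanSpace ℝ (Fin d)) c⁻¹ ⊆
          Matrix.toEuclideanLin (S⁻¹ ^ k * wordProd T I) '' Metric.closedBall 0 1 ∧
        Matrix.toEuclideanLin (S⁻¹ ^ k * wordProd T I) '' Metric.closedBall 0 1 ⊆
          Metric.closedBall 0 c)
    (h0 : (0 : EuclideanSpace ℝ (Fin d)) ∈ interior (convexHull ℝ (Set.range a))) :
    ∃ δ : ℝ, 0 < δ ∧ ∃ n : ℕ, 0 < n ∧ ∀ (k : ℕ) (I : Fin n → (Fin k → Fin ℓ)),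
      sumSets (fun j => Matrix.toEuclideanLin (wordProd T (I j)) ''
          Metric.closedBall 0 δ) ⊆
        sumSets (fun j => Matrix.toEuclideanLin (wordProd T (I j)) ''
          (⋃ i, (fun x => Matrix.toEuclideanLin (T i) x + a i) ''
            Metric.closedBall 0 δ)) := by
  obtain ⟨S, c, hS, hc, hSc⟩ := hball
  have hSdet : IsUnit S.det := (Matrix.isUnit_iff_isUnit_det S).1 hS
  have hc0 : 0 < c := one_pos.trans hc
  obtain ⟨ρ, hρ, hρa⟩ := nhds_basis_closedBall.mem_iff.1 (mem_interior_iff_mem_nhds.1 h0)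
  obtain ⟨R, hR⟩ : ∃ R, ∀ i, ‖a i‖ ≤ R := by
    obtain ⟨R, hR⟩ := (Set.finite_range fun i => ‖a i‖).bddAbove
    exact ⟨R, fun i => hR ⟨i, rfl⟩⟩
  obtain ⟨N, hN, hNS⟩ :=
    (LinearMap.toContinuousLinearMap (Matrix.toEuclideanLin S⁻¹)).bound
  simp only [LinearMap.coe_toContinuousLinearMap'] at hNS
  set δ := ρ / c ^ 2 with hδ
  have hδ0 : 0 < δ := by positivity
  set ε := δ / (c * N) with hε
  have hε0 : 0 < ε := by positivity
  obtain ⟨n, hn⟩ := exists_nat_ge ((c * R + c * δ) ^ 2 / ε ^ 2)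
  refine ⟨δ, hδ0, n + 1, n.succ_pos, fun k I => ?_⟩
  rintro y ⟨x, hx, rfl⟩
  choose b hb hbx using hx
  set M : Fin (n + 1) → _ :=
    fun j => Matrix.toEuclideanLin (S⁻¹ ^ k * wordProd T (I j)) with hM
  have hMle : ∀ j x, ‖M j x‖ ≤ c * ‖x‖ :=
    fun j => norm_apply_le_of_image_closedBall_subset (hSc k (I j)).2
  have hcancel : S ^ k * S⁻¹ ^ k = 1 := by
    rw [← (Commute.mul_pow _ k), Matrix.mul_nonsing_inv _ hSdet, one_pow]
    rw [Commute, SemiconjBy, Matrix.mul_nonsing_inv _ hSdet, Matrix.nonsing_inv_mul _ hSdet]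
  have hSM : ∀ j z, Matrix.toEuclideanLin (S ^ k) (M j z) =
      Matrix.toEuclideanLin (wordProd T (I j)) z := by
    intro j z
    rw [hM, ← toEuclideanLin_mul_apply, ← mul_assoc, hcancel, one_mul]
  have hy : ‖∑ j, M j (b j)‖ ≤ ((n + 1 : ℕ) : ℝ) * (c * δ) := by
    refine (norm_sum_le_of_le _ fun j _ => (hMle j (b j)).trans
      (mul_le_mul_of_nonneg_left (mem_closedBall_zero_iff.1 (hb j)) hc0.le)).trans ?_
    simp
  obtain ⟨i, z, hz, hsum⟩ := exists_sum_add_eq_of_norm_le (a := a) n.succ_pos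
    (K := c * R) (r := c * δ) hε0.le
    (fun j z hz => by
      obtain ⟨x, hx, hxz⟩ := exists_apply_eq_of_closedBall_subset_image hρ (hSc k (I j)).1
        (z := z) (hz.trans_eq (by rw [hδ]; field_simp))
      exact ⟨x, hρa (mem_closedBall_zero_iff.2 hx), hxz⟩)
    (fun j i => (hMle j (a i)).trans (mul_le_mul_of_nonneg_left (hR i) hc0.le))
    (by
      rw [div_le_iff₀ (by positivity)] at hn
      push_cast
      nlinarith [sq_nonneg ε])
    hy
  have hlift : ∀ j, ∃ b', ‖b'‖ ≤ δ ∧ M j (Matrix.toEuclideanLin (T (i j)) b') = z := by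
    intro j
    obtain ⟨b', hb', hb'z⟩ := exists_apply_eq_of_closedBall_subset_image hδ0
      (hSc (k + 1) (Fin.snoc (I j) (i j))).1 (z := Matrix.toEuclideanLin S⁻¹ z)
      ((hNS z).trans (by
        calc N * ‖z‖ ≤ N * ε := by gcongr
          _ = δ * c⁻¹ := by rw [hε]; field_simp))
    refine ⟨b', hb', ?_⟩
    have := congrArg (Matrix.toEuclideanLin S) hb'z
    rwa [← toEuclideanLin_mul_apply, ← toEuclideanLin_mul_apply, wordProd_snoc, pow_succ',
      Matrix.mul_nonsing_inv _ hSdet, mul_assoc S⁻¹, Matrix.mul_nonsing_inv_cancel_left _ _ hSdet,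
      ← mul_assoc, toEuclideanLin_mul_apply _ (T (i j)), Matrix.toLpLin_one,
      LinearMap.id_apply] at this
  choose b' hb' hb'z using hlift
  refine ⟨fun j => Matrix.toEuclideanLin (wordProd T (I j))
    (Matrix.toEuclideanLin (T (i j)) (b' j) + a (i j)), fun j => mem_image_of_mem _
      (mem_iUnion.2 ⟨i j, mem_image_of_mem _ (mem_closedBall_zero_iff.2 (hb' j))⟩), ?_⟩
  have := congrArg (Matrix.toEuclideanLin (S ^ k)) hsum
  simp only [map_sum, hSM] at this
  simp only [← hbx, this]
  refine Finset.sum_congr rfl fun j _ => ?_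
  rw [map_add, hSM, ← hb'z j, hSM, map_add]

/-- If sums of cylinders over a ball can always be refined, then every level of cylinders
covers the sum of balls. -/
lemma exists_words_sum_eq {E : Set (EuclideanSpace ℝ (Fin d))}
    (hE : ∀ i, ∀ x ∈ E, Matrix.toEuclideanLin (T i) x + a i ∈ E)
    {q : ℝ} (hT : ∀ i x, ‖Matrix.toEuclideanLin (T i) x‖ ≤ q * ‖x‖) {δ : ℝ} {n : ℕ}
    (hrefine : ∀ (k : ℕ) (I : Fin n → (Fin k → Fin ℓ)),
      sumSets (fun j => Matrix.toEuclideanLin (wordProd T (I j)) ''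
          Metric.closedBall 0 δ) ⊆
        sumSets (fun j => Matrix.toEuclideanLin (wordProd T (I j)) ''
          (⋃ i, (fun x => Matrix.toEuclideanLin (T i) x + a i) ''
            Metric.closedBall 0 δ)))
    (hq : 0 ≤ q) {y : EuclideanSpace ℝ (Fin d)}
    (hy : y ∈ sumSets (fun _ : Fin n => closedBall (0 : EuclideanSpace ℝ (Fin d)) δ))
    (k : ℕ) :
    ∃ (I : Fin n → (Fin k → Fin ℓ)) (t b : Fin n → EuclideanSpace ℝ (Fin d)),
      (∀ j, ‖b j‖ ≤ δ) ∧
      (∀ j x, ‖Matrix.toEuclideanLin (wordProd T (I j)) x‖ ≤ q ^ k * ‖x‖) ∧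
      (∀ j, ∀ x ∈ E, Matrix.toEuclideanLin (wordProd T (I j)) x + t j ∈ E) ∧
      y = ∑ j, (Matrix.toEuclideanLin (wordProd T (I j)) (b j) + t j) := by
  induction k with
  | zero =>
    obtain ⟨b, hb, rfl⟩ := hy
    refine ⟨fun _ => Fin.elim0, 0, b, fun j => mem_closedBall_zero_iff.1 (hb j), ?_, ?_, ?_⟩ <;>
      simp [wordProd]
  | succ k ih =>
    obtain ⟨I, t, b, hb, hI, ht, rfl⟩ := ih
    obtain ⟨x, hx, hsum⟩ := hrefine k I
      ⟨fun j => Matrix.toEuclideanLin (wordProd T (I j)) (b j),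
        fun j => mem_image_of_mem _ (mem_closedBall_zero_iff.2 (hb j)), rfl⟩
    choose w hw hwx using hx
    simp only [mem_iUnion] at hw
    choose i b' hb' hbw using hw
    refine ⟨fun j => Fin.snoc (I j) (i j),
      fun j => Matrix.toEuclideanLin (wordProd T (I j)) (a (i j)) + t j, b',
      fun j => mem_closedBall_zero_iff.1 (hb' j), fun j x => ?_, fun j x hx => ?_, ?_⟩
    · rw [wordProd_snoc, toEuclideanLin_mul_apply, pow_succ, mul_assoc]
      exact (hI j _).trans (mul_le_mul_of_nonneg_left (hT _ _) (pow_nonneg hq k))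
    · rw [wordProd_snoc, toEuclideanLin_mul_apply, ← add_assoc, ← map_add]
      exact ht j _ (hE _ _ hx)
    · rw [Finset.sum_add_distrib, hsum, ← Finset.sum_add_distrib]
      refine Finset.sum_congr rfl fun j _ => ?_
      rw [wordProd_snoc, toEuclideanLin_mul_apply, ← add_assoc, ← map_add, ← hwx, ← hbw]

/-- If sums of cylinders over a ball can always be refined, then the sum of balls is covered by
the sum of copies of the attractor. -/
lemma sumSets_closedBall_subset_sumSets_attractor {E : Set (EuclideanSpace ℝ (Fin d))}
    (hne : E.Nonempty) (hcomp : IsCompact E)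
    (hE : ∀ i, ∀ x ∈ E, Matrix.toEuclideanLin (T i) x + a i ∈ E)
    {q : ℝ} (hq : 0 ≤ q) (hq1 : q < 1)
    (hT : ∀ i x, ‖Matrix.toEuclideanLin (T i) x‖ ≤ q * ‖x‖) {δ : ℝ} {n : ℕ}
    (hrefine : ∀ (k : ℕ) (I : Fin n → (Fin k → Fin ℓ)),
      sumSets (fun j => Matrix.toEuclideanLin (wordProd T (I j)) ''
          Metric.closedBall 0 δ) ⊆
        sumSets (fun j => Matrix.toEuclideanLin (wordProd T (I j)) ''
          (⋃ i, (fun x => Matrix.toEuclideanLin (T i) x + a i) ''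
            Metric.closedBall 0 δ))) :
    sumSets (fun _ : Fin n => closedBall (0 : EuclideanSpace ℝ (Fin d)) δ) ⊆
      sumSets (fun _ : Fin n => E) := by
  intro y hy
  obtain ⟨e, he⟩ := hne
  choose I t b hb hI ht hsum using exists_words_sum_eq hE hT hrefine hq hy
  set p : ℕ → EuclideanSpace ℝ (Fin d) :=
    fun k => ∑ j, (Matrix.toEuclideanLin (wordProd T (I k j)) e + t k j) with hp
  refine (isCompact_sumSets fun _ => hcomp).isClosed.mem_of_tendsto (f := p)
    (b := Filter.atTop) ?_ (Filter.Eventually.of_forall fun k => ⟨_, fun j => ht k j e he, rfl⟩)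
  rw [tendsto_iff_norm_sub_tendsto_zero]
  refine squeeze_zero (g := fun k => n * (q ^ k * (‖e‖ + δ))) (fun _ => norm_nonneg _)
    (fun k => ?_) ?_
  · have hdiff : p k - y =
        ∑ j, Matrix.toEuclideanLin (wordProd T (I k j)) (e - b k j) := by
      rw [hsum k, hp, ← Finset.sum_sub_distrib]
      exact Finset.sum_congr rfl fun j _ => by rw [map_sub, add_sub_add_right_eq_sub]
    rw [hdiff]
    refine (norm_sum_le_of_le _ fun j _ => (hI k j _).trans
      (mul_le_mul_of_nonneg_left ((norm_sub_le _ _).trans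
        (add_le_add_right (hb k j) _)) (pow_nonneg hq k))).trans ?_
    simp
  · simpa using ((tendsto_pow_atTop_nhds_zero_of_lt_one hq hq1).mul_const (‖e‖ + δ)).const_mul
      (n : ℝ)

end IteratedFunctionSystem

/-- Proposition on affine IFSs: assume `B(0, c⁻¹) ⊆ T^{-k} T_I(B(0,1)) ⊆ B(0, c)` for all
words `I` of every length `k`, and that `0` is interior to `conv{a_1,…,a_ℓ}`. Then there
are `δ > 0` and `n` with `T_{I_1}Φ(B) + ⋯ + T_{I_n}Φ(B) ⊇ T_{I_1}B + ⋯ + T_{I_n}B` for all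
equal-length words `I_1, …, I_n`, where `B = B(0,δ)`, and moreover `⊕_n E ⊇ ⊕_n B`. -/
theorem selfAffine_sum_contains_of_ball_condition {d ℓ : ℕ} (hl : 0 < ℓ)
    (T : Fin ℓ → Matrix (Fin d) (Fin d) ℝ) (a : Fin ℓ → EuclideanSpace ℝ (Fin d))
    (hinv : ∀ i, IsUnit (T i))
    (hnorm : ∀ i, ∃ c : ℝ, 0 ≤ c ∧ c < 1 ∧
      ∀ x : EuclideanSpace ℝ (Fin d), ‖Matrix.toEuclideanLin (T i) x‖ ≤ c * ‖x‖)
    (E : Set (EuclideanSpace ℝ (Fin d))) (hne : E.Nonempty) (hcomp : IsCompact E)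
    (hattr : E = ⋃ i, (fun x => Matrix.toEuclideanLin (T i) x + a i) '' E)
    (hball : ∃ (S : Matrix (Fin d) (Fin d) ℝ) (c : ℝ), IsUnit S ∧ 1 < c ∧
      ∀ (k : ℕ) (I : Fin k → Fin ℓ),
        Metric.closedBall (0 : EuclideanSpace ℝ (Fin d)) c⁻¹ ⊆
          Matrix.toEuclideanLin (S⁻¹ ^ k * wordProd T I) '' Metric.closedBall 0 1 ∧
        Matrix.toEuclideanLin (S⁻¹ ^ k * wordProd T I) '' Metric.closedBall 0 1 ⊆
          Metric.closedBall 0 c)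
    (h0 : (0 : EuclideanSpace ℝ (Fin d)) ∈ interior (convexHull ℝ (Set.range a))) :
    ∃ δ : ℝ, 0 < δ ∧ ∃ n : ℕ, 0 < n ∧
      (∀ (k : ℕ) (I : Fin n → (Fin k → Fin ℓ)),
        sumSets (fun j => Matrix.toEuclideanLin (wordProd T (I j)) ''
            Metric.closedBall 0 δ) ⊆
          sumSets (fun j => Matrix.toEuclideanLin (wordProd T (I j)) ''
            (⋃ i, (fun x => Matrix.toEuclideanLin (T i) x + a i) ''
              Metric.closedBall 0 δ))) ∧
      sumSets (fun _ : Fin n => Metric.closedBall (0 : EuclideanSpace ℝ (Fin d)) δ) ⊆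
        sumSets (fun _ : Fin n => E) := by
  have : Nonempty (Fin ℓ) := ⟨⟨0, hl⟩⟩
  obtain ⟨δ, hδ, n, hn, hrefine⟩ := exists_sum_cylinders_subset_sum_refined hball h0
  refine ⟨δ, hδ, n, hn, hrefine, ?_⟩
  choose q hq0 hq1 hq using hnorm
  obtain ⟨m, hm⟩ := Finite.exists_max q
  refine sumSets_closedBall_subset_sumSets_attractor hne hcomp (fun i x hx => ?_) (hq0 m) (hq1 m)
    (fun i x => (hq i x).trans (mul_le_mul_of_nonneg_right (hm i) (norm_nonneg x))) hrefine
  rw [hattr]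
  exact mem_iUnion.2 ⟨i, mem_image_of_mem _ hx⟩
end

section
/- Let T = [[c, e], [0, d]] be a 2×2 upper triangular real matrix with d > c > 0 and e ∈ ℝ. Let ε > 0 satisfy ε|e| < d − c, and define the cone K = {(x, y) ∈ ℝ² : y ≥ ε|x|}. Then T maps K ∖ {0} into the interior of K. -/
open Set

/-- Let `T = [[c, e], [0, d]]` with `d > c > 0`, and let `ε > 0` satisfy `ε|e| < d − c`.
Then `T` maps the cone `K = {(x, y) : y ≥ ε|x|}` minus the origin into the interior of
`K`. -/
theorem triangular_matrix_maps_cone_into_interior (c d e ε : ℝ)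
    (hc : 0 < c) (hcd : c < d) (hε : 0 < ε) (h : ε * |e| < d - c) :
    ∀ v : Fin 2 → ℝ, ε * |v 0| ≤ v 1 → v ≠ 0 →
      (!![c, e; 0, d]).mulVec v ∈ interior {w : Fin 2 → ℝ | ε * |w 0| ≤ w 1} := by
  intro v hv hv0
  have hy : 0 < v 1 := by
    refine lt_of_le_of_ne (le_trans (by positivity) hv) fun hy => hv0 ?_
    have hx : |v 0| ≤ 0 := by
      rw [← hy] at hv
      exact nonpos_of_mul_nonpos_right hv hε
    ext i
    fin_cases i
    · exact abs_nonpos_iff.mp hx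
    · exact hy.symm
  have hopen : IsOpen {w : Fin 2 → ℝ | ε * |w 0| < w 1} :=
    isOpen_lt (by fun_prop) (by fun_prop)
  refine interior_maximal (ofPred_subset_ofPred.mpr fun w hw => hw.le) hopen ?_
  have key : ε * |c * v 0 + e * v 1| < d * v 1 := by
    calc ε * |c * v 0 + e * v 1| ≤ ε * (|c * v 0| + |e * v 1|) := by
          gcongr
          exact abs_add_le _ _
      _ = c * (ε * |v 0|) + ε * |e| * v 1 := by
          rw [abs_mul, abs_mul, abs_of_pos hc, abs_of_pos hy]
          ring
      _ < c * v 1 + (d - c) * v 1 :=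
          add_lt_add_of_le_of_lt (mul_le_mul_of_nonneg_left hv hc.le) (mul_lt_mul_of_pos_right h hy)
      _ = d * v 1 := by ring
  simpa [Matrix.mulVec, dotProduct, Fin.sum_univ_two] using key
end

section
/- For i = 1, …, ℓ let T_i = [[c, e_i], [0, d]] be 2×2 upper triangular real matrices with common diagonal entries c > d > 0 and arbitrary e_i ∈ ℝ, and let T = diag(c, d). Then there exists a constant λ > 1 such that for every n ≥ 0 and every word I = i_1…i_n ∈ {1, …, ℓ}^n, one has B(0, λ^{-1}) ⊆ T^{-n} T_I (B(0,1)) ⊆ B(0, λ), where T_I = T_{i_1} ⋯ T_{i_n} (the identity matrix when n = 0). -/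
open Metric Set

/-- A product of upper triangular matrices with common diagonal `(c, d)` is a shear, by a bounded
amount, rescaled by the corresponding power of `diag(c, d)`. -/
lemma exists_prod_upperTriangular_eq {c d M : ℝ} (hd : 0 < d) (hdc : d < c) (L : List ℝ)
    (hL : ∀ a ∈ L, |a| ≤ M) :
    ∃ x : ℝ, |x| ≤ M / (c - d) * (1 - (d / c) ^ L.length) ∧
      (L.map fun a => !![c, a; 0, d]).prod =
        !![c ^ L.length, c ^ L.length * x; 0, d ^ L.length] := by
  have hc : 0 < c := hd.trans hdc
  have hcd : c - d ≠ 0 := (sub_pos.2 hdc).ne'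
  induction L with
  | nil => exact ⟨0, by simp, by simp [Matrix.one_fin_two]⟩
  | cons a L ih =>
    obtain ⟨x, hx, hprod⟩ := ih fun b hb => hL b (List.mem_cons_of_mem _ hb)
    have ha : |a| ≤ M := hL a List.mem_cons_self
    refine ⟨x + a / c * (d / c) ^ L.length, ?_, ?_⟩
    · calc |x + a / c * (d / c) ^ L.length|
          ≤ |x| + |a| / c * (d / c) ^ L.length := by
            refine (abs_add_le _ _).trans_eq ?_
            rw [abs_mul, abs_div, abs_of_pos hc,
              abs_of_nonneg (by positivity : 0 ≤ (d / c) ^ L.length)]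
        _ ≤ M / (c - d) * (1 - (d / c) ^ L.length) + M / c * (d / c) ^ L.length := by
            gcongr
        _ = M / (c - d) * (1 - (d / c) ^ (a :: L).length) := by
            rw [List.length_cons, pow_succ]
            generalize (d / c) ^ L.length = r
            field_simp
            ring
    · rw [List.map_cons, List.prod_cons, hprod, List.length_cons, Matrix.mul_fin_two, div_pow]
      ext i j
      fin_cases i <;> fin_cases j <;> simp [pow_succ] <;> field_simp

lemma inv_diag_pow_mul_upperTriangular {c d : ℝ} (hc : c ≠ 0) (hd : d ≠ 0) (n : ℕ) (x : ℝ) :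
    (!![c, 0; 0, d])⁻¹ ^ n * !![c ^ n, c ^ n * x; 0, d ^ n] = !![1, x; 0, 1] := by
  have hinv : (!![c, 0; 0, d])⁻¹ = Matrix.diagonal ![c⁻¹, d⁻¹] := by
    refine Matrix.inv_eq_right_inv ?_
    ext i j
    fin_cases i <;> fin_cases j <;> simp [hc, hd]
  rw [hinv, Matrix.diagonal_pow]
  ext i j
  fin_cases i <;> fin_cases j <;> simp [hc, hd]

lemma norm_toEuclideanLin_shear_le (x : ℝ) (v : EuclideanSpace ℝ (Fin 2)) :
    ‖Matrix.toEuclideanLin !![1, x; 0, 1] v‖ ≤ (1 + |x|) * ‖v‖ := by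
  refine abs_le_of_sq_le_sq' ?_ (by positivity) |>.2
  rw [mul_pow, EuclideanSpace.real_norm_sq_eq, EuclideanSpace.real_norm_sq_eq]
  simp only [Fin.sum_univ_two, Matrix.toLpLin_apply, Matrix.mulVec, dotProduct]
  simp only [Matrix.of_apply, Matrix.cons_val_zero, Matrix.cons_val_one, one_mul, zero_mul,
    zero_add]
  have hcross : x * (v 0 * v 1) ≤ |x| * ((v 0 ^ 2 + v 1 ^ 2) / 2) := by
    refine (le_abs_self _).trans ?_
    rw [abs_mul]
    gcongr
    exact abs_le.2 ⟨by nlinarith [sq_nonneg (v 0 + v 1)], by nlinarith [sq_nonneg (v 0 - v 1)]⟩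
  nlinarith [sq_abs x, mul_nonneg (abs_nonneg x) (sq_nonneg (v 0)),
    mul_nonneg (abs_nonneg x) (sq_nonneg (v 1)), mul_nonneg (sq_nonneg x) (sq_nonneg (v 0))]

lemma toEuclideanLin_shear_neg (x : ℝ) (v : EuclideanSpace ℝ (Fin 2)) :
    Matrix.toEuclideanLin !![1, x; 0, 1] (Matrix.toEuclideanLin !![1, -x; 0, 1] v) = v := by
  ext i
  fin_cases i
  · simp [Matrix.toLpLin_apply, dotProduct]
    ring
  · simp [Matrix.toLpLin_apply, dotProduct]

/-- For upper triangular matrices `T_i = [[c, e_i], [0, d]]` with common diagonal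
`c > d > 0` and `T = diag(c, d)`, there is `λ > 1` such that for every word
`I = i_1…i_n`, `B(0, λ⁻¹) ⊆ T^{-n} T_I(B(0,1)) ⊆ B(0, λ)`. -/
theorem triangular_products_ball_bounds {ℓ : ℕ} (c d : ℝ) (hd : 0 < d) (hdc : d < c)
    (e : Fin ℓ → ℝ) :
    ∃ lam : ℝ, 1 < lam ∧ ∀ (n : ℕ) (I : Fin n → Fin ℓ),
      Metric.closedBall (0 : EuclideanSpace ℝ (Fin 2)) lam⁻¹ ⊆
        Matrix.toEuclideanLin ((!![c, 0; 0, d])⁻¹ ^ n *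
          (List.ofFn fun j => !![c, e (I j); 0, d]).prod) '' Metric.closedBall 0 1 ∧
      Matrix.toEuclideanLin ((!![c, 0; 0, d])⁻¹ ^ n *
          (List.ofFn fun j => !![c, e (I j); 0, d]).prod) '' Metric.closedBall 0 1 ⊆
        Metric.closedBall (0 : EuclideanSpace ℝ (Fin 2)) lam := by
  have hc : 0 < c := hd.trans hdc
  have hcd : 0 < c - d := sub_pos.2 hdc
  set M : ℝ := ∑ i, |e i|
  have hM0 : 0 ≤ M := Finset.sum_nonneg fun i _ => abs_nonneg (e i)
  have hK : 0 ≤ M / (c - d) := by positivity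
  refine ⟨2 + M / (c - d), by linarith, fun n I => ?_⟩
  obtain ⟨x, hx, hprod⟩ := exists_prod_upperTriangular_eq (M := M) hd hdc
    (List.ofFn fun j => e (I j)) (by
      intro a ha
      obtain ⟨j, rfl⟩ := List.mem_ofFn.1 ha
      exact Finset.single_le_sum (f := fun i => |e i|) (fun i _ => abs_nonneg _)
        (Finset.mem_univ (I j)))
  rw [List.map_ofFn, List.length_ofFn] at hprod
  have hprod' : (List.ofFn fun j => !![c, e (I j); 0, d]).prod =
      !![c ^ n, c ^ n * x; 0, d ^ n] := hprod
  have hxK : 1 + |x| ≤ 2 + M / (c - d) := by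
    have hpow : 0 ≤ (d / c) ^ (List.ofFn fun j => e (I j)).length := by positivity
    nlinarith
  rw [hprod', inv_diag_pow_mul_upperTriangular hc.ne' hd.ne']
  constructor
  · intro v hv
    rw [mem_closedBall_zero_iff] at hv
    refine ⟨Matrix.toEuclideanLin !![1, -x; 0, 1] v, ?_, toEuclideanLin_shear_neg x v⟩
    rw [mem_closedBall_zero_iff]
    calc _ ≤ (1 + |-x|) * ‖v‖ := norm_toEuclideanLin_shear_le _ _
      _ ≤ (2 + M / (c - d)) * (2 + M / (c - d))⁻¹ := by
        rw [abs_neg]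
        gcongr
      _ = 1 := mul_inv_cancel₀ (by positivity)
  · rintro _ ⟨v, hv, rfl⟩
    rw [mem_closedBall_zero_iff] at hv ⊢
    calc _ ≤ (1 + |x|) * ‖v‖ := norm_toEuclideanLin_shear_le _ _
      _ ≤ (2 + M / (c - d)) * 1 := by gcongr
      _ = 2 + M / (c - d) := mul_one _
end
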